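/- (Proposition 3.4) There is no ρ-invariant subspace of ℂ⁶ of dimension 4 if and only if λ₁³ ≠ q². -/

import Mathlib

open Matrix Polynomial

noncomputable def M1 (q l : ℂ) : Matrix (Fin 6) (Fin 6) ℂ :=
  !![q, -q^2*l, q^2, q^2, -q^2/l, 1;
     0, l,      q^2, 0,   1/l,    1;
     0, 0,      q^2, 0,   0,      1;
     0, 0,      0,   q^2, -q^2/l, 1;
     0, 0,      0,   0,   1/l,    1;
     0, 0,      0,   0,   0,      1]

noncomputable def M2 (q l : ℂ) : Matrix (Fin 6) (Fin 6) ℂ :=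
  !![1,    0,    0,   0,   0,   0;
     -1/l, 1/l,  0,   0,   0,   0;
     q,    1,    q^2, 0,   0,   0;
     -q^2, 0,    0,   q^2, 0,   0;
     l,    -l,   0,   -l,  l,   0;
     -1,   -q^2, -q,  1,   q^2, q]

/-- A subspace `W ⊆ ℂ⁶` is ρ-invariant if it is mapped into itself by both `M1` and `M2`
(acting on column vectors). -/
def RhoInvariant (q l : ℂ) (W : Submodule ℂ (Fin 6 → ℂ)) : Prop :=
  (∀ x ∈ W, (M1 q l).mulVec x ∈ W) ∧ (∀ x ∈ W, (M2 q l).mulVec x ∈ W)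

/-!
The Garside element `Δ = σ₁σ₂σ₁ = σ₂σ₁σ₂` acts by a monomial matrix with `Δ² = -q²`. If `W` is an
invariant subspace of dimension `4`, then `σ₁` acts on the plane `ℂ⁶ ⧸ W` with a cube root of unity
as an eigenvalue, so `Δ` is not a scalar there: otherwise `σ₁` and `σ₂` would act equally, every
eigenvalue `β` of `σ₁` would satisfy `β⁶ = Δ²`, and `-q²` would be `1`. Cayley-Hamilton then makes
`Δ` traceless, so `(det σ₁)³ = det Δ = q²`, and the other eigenvalue `α` of `σ₁` satisfies
`α³ = q²`.

If `λ³ ≠ q²`, then `α` is none of `q`, `q²`, `λ`, so a functional `φ` killing `W` with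
`φ ∘ σ₁ = α φ` vanishes on the first four basis vectors. By dimension `W` is the common kernel of
`φ` and `φ ∘ Δ`; it contains the third basis vector, whose image under `σ₁` forces `φ = 0`. When
`λ³ = q²` the invariant subspace is given by explicit equations.
-/

section RankTwo

variable {K V : Type*} [Field K] [AddCommGroup V] [Module K V]

open Module Module.End

lemma charpoly_of_finrank_eq_two [FiniteDimensional K V] (hV : finrank K V = 2) (f : End K V) :
    f.charpoly = X ^ 2 - C (LinearMap.trace K V f) * X + C (LinearMap.det f) := by
  let b := finBasisOfFinrankEq K V hV
  rw [← LinearMap.charpoly_toMatrix f b, charpoly_fin_two, LinearMap.trace_eq_matrix_trace K b,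
    LinearMap.det_toMatrix]

lemma sq_sub_trace_smul_add_det_smul_one (hV : finrank K V = 2) (f : End K V) :
    f ^ 2 - LinearMap.trace K V f • f + LinearMap.det f • 1 = 0 := by
  have : Module.Finite K V := finite_of_finrank_eq_succ hV
  simpa [charpoly_of_finrank_eq_two hV, Algebra.algebraMap_eq_smul_one, sub_eq_add_neg] using
    LinearMap.aeval_self_charpoly f

lemma exists_hasEigenvalue_det_eq_mul (hV : finrank K V = 2) {f : End K V} {β : K}
    (hβ : f.HasEigenvalue β) : ∃ α, f.HasEigenvalue α ∧ LinearMap.det f = α * β := by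
  have : Module.Finite K V := finite_of_finrank_eq_succ hV
  simp only [hasEigenvalue_iff_isRoot_charpoly, charpoly_of_finrank_eq_two hV, IsRoot.def,
    eval_add, eval_sub, eval_mul, eval_pow, eval_X, eval_C] at hβ ⊢
  exact ⟨LinearMap.trace K V f - β, by linear_combination hβ, by linear_combination hβ⟩

lemma exists_dual_eigenvector [FiniteDimensional K V] {f : End K V} {μ : K}
    (hμ : f.HasEigenvalue μ) : ∃ φ : Dual K V, φ ≠ 0 ∧ ∀ x, φ (f x) = μ * φ x := by
  have hker : LinearMap.ker (f - μ • 1) ≠ ⊥ := by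
    rw [← eigenspace_def]
    exact hμ
  have hrange : LinearMap.range (f - μ • 1) < ⊤ :=
    lt_top_iff_ne_top.mpr (mt LinearMap.ker_eq_bot_iff_range_eq_top.mpr hker)
  obtain ⟨φ, hφ, hle⟩ := Submodule.exists_le_ker_of_lt_top _ hrange
  refine ⟨φ, hφ, fun x ↦ sub_eq_zero.mp ?_⟩
  simpa using hle (LinearMap.mem_range_self _ x)

lemma det_eq_neg_of_sq_eq_smul_one (hV : finrank K V = 2) {δ : End K V} {c : K}
    (hδ : δ ^ 2 = c • 1) (hns : ∀ s : K, δ ≠ s • 1) : LinearMap.det δ = -c := by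
  have : Nontrivial V := nontrivial_of_finrank_eq_succ hV
  have htr : LinearMap.trace K V δ • δ = (c + LinearMap.det δ) • 1 := by
    have h := sq_sub_trace_smul_add_det_smul_one hV δ
    rw [hδ, sub_add_eq_add_sub, sub_eq_zero] at h
    rw [add_smul, h]
  have htr0 : LinearMap.trace K V δ = 0 := by
    by_contra h0
    apply hns ((LinearMap.trace K V δ)⁻¹ * (c + LinearMap.det δ))
    rw [mul_smul, ← htr, inv_smul_smul₀ h0]
  rw [htr0, zero_smul, eq_comm, smul_eq_zero_iff_left one_ne_zero] at htr
  linear_combination htr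

lemma det_eq_det_of_braid {f g : End K V} (hfg : f * g * f = g * f * g)
    (h0 : LinearMap.det (f * g * f) ≠ 0) : LinearMap.det f = LinearMap.det g := by
  have h := congrArg LinearMap.det hfg
  simp only [map_mul, mul_ne_zero_iff] at h h0
  apply mul_left_cancel₀ (mul_ne_zero h0.1.1 h0.1.2)
  linear_combination h

lemma pow_six_eq_of_braid_of_eq_smul_one {f g : End K V} {β s c : K}
    (hfg : f * g * f = g * f * g) (hs : f * g * f = s • 1) (hc : (f * g * f) ^ 2 = c • 1)
    (hc0 : c ≠ 0) (hβ : f.HasEigenvalue β) : β ^ 6 = c := by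
  obtain ⟨v, hv⟩ := hβ.exists_hasEigenvector
  have : Nontrivial V := ⟨v, 0, hv.2⟩
  have hsc : s ^ 2 = c := by
    rw [hs, _root_.smul_pow, one_pow] at hc
    exact smul_left_injective K one_ne_zero hc
  have hs0 : s ≠ 0 := by rintro rfl; exact hc0 (by rw [← hsc]; ring)
  have hgf : g = f := by
    have h : s • g = s • f := by
      calc s • g = f * g * f * g := by rw [hs, smul_one_mul]
        _ = f * (g * f * g) := by noncomm_ring
        _ = s • f := by rw [← hfg, hs, mul_smul_one]
    exact smul_right_injective _ hs0 h
  have hβs : β ^ 3 = s := by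
    have h := hv.pow_apply 3
    rw [show f ^ 3 = s • 1 by rw [← hs, hgf]; noncomm_ring] at h
    exact (smul_left_injective K hv.2 h).symm
  rw [← hsc, ← hβs]
  ring

lemma det_pow_three_eq_neg_of_braid (hV : finrank K V = 2) {f g : End K V} {β c : K}
    (hfg : f * g * f = g * f * g) (hc : (f * g * f) ^ 2 = c • 1) (hc0 : c ≠ 0)
    (hβ : f.HasEigenvalue β) (hβc : β ^ 6 ≠ c) : LinearMap.det f ^ 3 = -c := by
  have hdet : LinearMap.det (f * g * f) = -c :=
    det_eq_neg_of_sq_eq_smul_one hV hc fun s hs ↦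
      hβc (pow_six_eq_of_braid_of_eq_smul_one hfg hs hc hc0 hβ)
  have hdet0 : LinearMap.det (f * g * f) ≠ 0 := hdet ▸ neg_ne_zero.mpr hc0
  rw [← hdet, map_mul, map_mul, ← det_eq_det_of_braid hfg hdet0]
  ring

lemma eq_ker_prod_of_finrank_add_two {W : Submodule K V}
    {φ ψ : Dual K V} {a b : V} (hW : finrank K W + 2 = finrank K V)
    (hφW : W ≤ LinearMap.ker φ) (hψW : W ≤ LinearMap.ker ψ)
    (hφa : φ a = 0) (hψa : ψ a ≠ 0) (hφb : φ b ≠ 0) :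
    W = LinearMap.ker (φ.prod ψ) := by
  have : Module.Finite K V := finite_of_finrank_pos (by omega)
  have hsurj : Function.Surjective (φ.prod ψ) := fun ⟨s, t⟩ ↦
    ⟨((t - s / φ b * ψ b) / ψ a) • a + (s / φ b) • b, by simp [hφa, hψa, hφb]⟩
  have hrank := LinearMap.finrank_range_add_finrank_ker (φ.prod ψ)
  rw [LinearMap.range_eq_top.mpr hsurj, finrank_top, finrank_prod, finrank_self] at hrank
  refine Submodule.eq_of_le_of_finrank_eq ?_ (by omega)
  rw [LinearMap.ker_prod]
  exact le_inf hφW hψW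

end RankTwo

section Matrix

variable {K m n : Type*} [Field K] [Fintype n]

open Module

/-- The endomorphism of `Kⁿ ⧸ W` induced by a matrix under which `W` is invariant. -/
def quotientEnd (A : Matrix n n K) (W : Submodule K (n → K)) (hA : ∀ x ∈ W, A *ᵥ x ∈ W) :
    End K ((n → K) ⧸ W) :=
  W.mapQ W A.mulVecLin hA

@[simp]
lemma quotientEnd_mk {A : Matrix n n K} {W : Submodule K (n → K)}
    (hA : ∀ x ∈ W, A *ᵥ x ∈ W) (x : n → K) :
    quotientEnd A W hA (Submodule.Quotient.mk x) = Submodule.Quotient.mk (A *ᵥ x) :=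
  rfl

lemma hasEigenvalue_quotientEnd {A : Matrix n n K} {W : Submodule K (n → K)}
    (hA : ∀ x ∈ W, A *ᵥ x ∈ W) {x : n → K} {μ : K} (hx : x ∉ W) (hAx : A *ᵥ x - μ • x ∈ W) :
    (quotientEnd A W hA).HasEigenvalue μ := by
  refine End.hasEigenvalue_of_hasEigenvector (x := Submodule.Quotient.mk x)
    ⟨End.mem_eigenspace_iff.mpr ?_, by simpa using hx⟩
  rw [quotientEnd_mk, ← Submodule.Quotient.mk_smul]
  exact (Submodule.Quotient.eq W).mpr hAx

lemma exists_dual_eigenvector_quotientEnd {A : Matrix n n K} {W : Submodule K (n → K)}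
    {hA : ∀ x ∈ W, A *ᵥ x ∈ W} {μ : K} (hμ : (quotientEnd A W hA).HasEigenvalue μ) :
    ∃ φ : Dual K (n → K), φ ≠ 0 ∧ W ≤ LinearMap.ker φ ∧ ∀ x, φ (A *ᵥ x) = μ * φ x := by
  obtain ⟨χ, hχ, hχA⟩ := exists_dual_eigenvector hμ
  refine ⟨χ ∘ₗ W.mkQ, fun h ↦ hχ ?_, fun x hx ↦ ?_, fun x ↦ hχA (W.mkQ x)⟩
  · exact (LinearMap.cancel_right W.mkQ_surjective).mp (h.trans (LinearMap.zero_comp _).symm)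
  · rw [LinearMap.mem_ker, LinearMap.comp_apply, Submodule.mkQ_apply,
      (Submodule.Quotient.mk_eq_zero W).mpr hx, map_zero]

lemma finrank_ker_mulVecLin_add_card [Fintype m] [DecidableEq m] {N : Matrix m n K}
    {R : Matrix n m K} (hNR : N * R = 1) :
    finrank K (LinearMap.ker N.mulVecLin) + Fintype.card m = Fintype.card n := by
  have hsurj : Function.Surjective N.mulVecLin := fun y ↦
    ⟨R *ᵥ y, by rw [mulVecLin_apply, mulVec_mulVec, hNR, one_mulVec]⟩
  have hrank := LinearMap.finrank_range_add_finrank_ker N.mulVecLin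
  rw [LinearMap.range_eq_top.mpr hsurj, finrank_top, finrank_fintype_fun_eq_card,
    finrank_fintype_fun_eq_card] at hrank
  omega

lemma mulVec_mem_ker_of_mul_eq_mul [Fintype m] {N : Matrix m n K} {A : Matrix n n K}
    {P : Matrix m m K} (h : N * A = P * N) {x : n → K} (hx : x ∈ LinearMap.ker N.mulVecLin) :
    A *ᵥ x ∈ LinearMap.ker N.mulVecLin := by
  rw [LinearMap.mem_ker, mulVecLin_apply] at hx ⊢
  rw [mulVec_mulVec, h, ← mulVec_mulVec, hx, mulVec_zero]

end Matrix

/-- The image of the Garside element `Δ = σ₁σ₂σ₁ = σ₂σ₁σ₂`, whose square generates the centre of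
the braid group `B₃`. -/
noncomputable def garside (q l : ℂ) : Matrix (Fin 6) (Fin 6) ℂ :=
  !![0,  0,     0,  0,   0,      q;
     0,  0,     0,  0,   -q / l, 0;
     0,  0,     0,  q^2, 0,      0;
     0,  0,     -1, 0,   0,      0;
     0,  q * l, 0,  0,   0,      0;
     -q, 0,     0,  0,   0,      0]

section Garside

variable {q l : ℂ}

lemma M1_mul_M2 (hq : q ^ 2 + q + 1 = 0) (hl : l ≠ 0) :
    M1 q l * M2 q l =
      !![0,  0,    0,  0,  0,   q;
         0,  0,    0,  0,  -q,  q;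
         0,  0,    0,  1,  q^2, q;
         0,  0,    -q, 0,  0,   q;
         0,  q,    -q, 0,  -q,  q;
         -1, -q^2, -q, 1,  q^2, q] := by
  ext i j
  fin_cases i <;> fin_cases j <;>
    simp [M1, M2, mul_apply, Fin.sum_univ_six] <;> field_simp <;> grind

lemma M1_mul_M2_mul_M1 (hq : q ^ 2 + q + 1 = 0) (hl : l ≠ 0) :
    M1 q l * M2 q l * M1 q l = garside q l := by
  rw [M1_mul_M2 hq hl]
  ext i j
  fin_cases i <;> fin_cases j <;>
    simp [M1, garside, mul_apply, Fin.sum_univ_six] <;> field_simp <;> grind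

lemma M2_mul_M1_mul_M2 (hq : q ^ 2 + q + 1 = 0) (hl : l ≠ 0) :
    M2 q l * M1 q l * M2 q l = garside q l := by
  rw [mul_assoc, M1_mul_M2 hq hl]
  ext i j
  fin_cases i <;> fin_cases j <;>
    simp [M2, garside, mul_apply, Fin.sum_univ_six] <;> field_simp <;> grind

lemma garside_mul_garside (hl : l ≠ 0) :
    garside q l * garside q l = (-q ^ 2) • (1 : Matrix (Fin 6) (Fin 6) ℂ) := by
  ext i j
  fin_cases i <;> fin_cases j <;> simp [garside, mul_apply, Fin.sum_univ_six] <;> field_simp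

/-- The standard basis vectors of `ℂ⁶`, on which the representation is computed; as for all indices
in `Fin 6`, the numbering starts at `0`. -/
abbrev basisVec (i : Fin 6) : Fin 6 → ℂ := Pi.single i 1

lemma M1_mulVec_basisVec (i : Fin 6) :
    M1 q l *ᵥ basisVec i =
      ![q • basisVec 0,
        (-q ^ 2 * l) • basisVec 0 + l • basisVec 1,
        q ^ 2 • (basisVec 0 + basisVec 1 + basisVec 2),
        q ^ 2 • (basisVec 0 + basisVec 3),
        l⁻¹ • ((-q ^ 2) • basisVec 0 + basisVec 1 + (-q ^ 2) • basisVec 3 + basisVec 4),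
        basisVec 0 + basisVec 1 + basisVec 2 + basisVec 3 + basisVec 4 + basisVec 5] i := by
  rw [mulVec_single_one]
  ext j
  fin_cases i <;> fin_cases j <;> simp [M1, div_eq_inv_mul]

lemma garside_mulVec_basisVec (i : Fin 6) :
    garside q l *ᵥ basisVec i =
      ![(-q) • basisVec 5, (q * l) • basisVec 4, -basisVec 3, q ^ 2 • basisVec 2,
        (-q / l) • basisVec 1, q • basisVec 0] i := by
  rw [mulVec_single_one]
  ext j
  fin_cases i <;> fin_cases j <;> simp [garside]

end Garside

namespace RhoInvariant

variable {q l : ℂ} {W : Submodule ℂ (Fin 6 → ℂ)}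

open Module

lemma garside_mulVec_mem (hq : q ^ 2 + q + 1 = 0) (hl : l ≠ 0) (hW : RhoInvariant q l W)
    {x : Fin 6 → ℂ} (hx : x ∈ W) : garside q l *ᵥ x ∈ W := by
  rw [← M1_mul_M2_mul_M1 hq hl, ← mulVec_mulVec, ← mulVec_mulVec]
  exact hW.1 _ (hW.2 _ (hW.1 _ hx))

lemma eq_top_of_basisVec_mem (hq : q ^ 2 + q + 1 = 0) (hl : l ≠ 0) (hW : RhoInvariant q l W)
    (h0 : basisVec 0 ∈ W) (h3 : basisVec 3 ∈ W) : W = ⊤ := by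
  have hq0 : q ≠ 0 := by rintro rfl; simp at hq
  have hΔ (i : Fin 6) (hi : basisVec i ∈ W) := hW.garside_mulVec_mem hq hl hi
  simp only [garside_mulVec_basisVec] at hΔ
  have h5 : basisVec 5 ∈ W := (W.smul_mem_iff (neg_ne_zero.mpr hq0)).mp (hΔ 0 h0)
  have h2 : basisVec 2 ∈ W := (W.smul_mem_iff (pow_ne_zero 2 hq0)).mp (hΔ 3 h3)
  have h1 : basisVec 1 ∈ W := by
    have h : M1 q l *ᵥ basisVec 2 = q ^ 2 • (basisVec 0 + basisVec 1 + basisVec 2) :=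
      M1_mulVec_basisVec 2
    have h012 : q ^ 2 • (basisVec 0 + basisVec 1 + basisVec 2) ∈ W := h ▸ hW.1 _ h2
    rwa [W.smul_mem_iff (pow_ne_zero 2 hq0), W.add_mem_iff_left h2, W.add_mem_iff_right h0]
      at h012
  have h4 : basisVec 4 ∈ W := (W.smul_mem_iff (mul_ne_zero hq0 hl)).mp (hΔ 1 h1)
  rw [eq_top_iff, ← (Pi.basisFun ℂ (Fin 6)).span_eq, Submodule.span_le, Set.range_subset_iff]
  intro i
  rw [Pi.basisFun_apply]
  fin_cases i
  exacts [h0, h1, h2, h3, h4, h5]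

lemma exists_hasEigenvalue_pow_three_eq_one (hq : q ^ 2 + q + 1 = 0) (hl : l ≠ 0)
    (hW : RhoInvariant q l W) (hne : W ≠ ⊤) :
    ∃ β : ℂ, β ^ 3 = 1 ∧ (quotientEnd (M1 q l) W hW.1).HasEigenvalue β := by
  have hq3 : q ^ 3 = 1 := by linear_combination (q - 1) * hq
  by_cases h0 : basisVec 0 ∈ W
  · have h3 : basisVec 3 ∉ W := fun h3 ↦ hne (hW.eq_top_of_basisVec_mem hq hl h0 h3)
    refine ⟨q ^ 2, by linear_combination (q ^ 3 + 1) * hq3, hasEigenvalue_quotientEnd _ h3 ?_⟩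
    have h : M1 q l *ᵥ basisVec 3 = q ^ 2 • (basisVec 0 + basisVec 3) := M1_mulVec_basisVec 3
    rw [h, smul_add, add_sub_cancel_right]
    exact W.smul_mem _ h0
  · refine ⟨q, hq3, hasEigenvalue_quotientEnd _ h0 ?_⟩
    have h : M1 q l *ᵥ basisVec 0 = q • basisVec 0 := M1_mulVec_basisVec 0
    rw [h, sub_self]
    exact W.zero_mem

lemma quotientEnd_M1_mul_M2_mul_M1 (hq : q ^ 2 + q + 1 = 0) (hl : l ≠ 0)
    (hW : RhoInvariant q l W) :
    quotientEnd (M1 q l) W hW.1 * quotientEnd (M2 q l) W hW.2 * quotientEnd (M1 q l) W hW.1 =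
      quotientEnd (garside q l) W fun _ ↦ hW.garside_mulVec_mem hq hl := by
  refine LinearMap.ext fun x ↦ ?_
  obtain ⟨x, rfl⟩ := W.mkQ_surjective x
  simp [mulVec_mulVec, ← mul_assoc, M1_mul_M2_mul_M1 hq hl]

lemma quotientEnd_M2_mul_M1_mul_M2 (hq : q ^ 2 + q + 1 = 0) (hl : l ≠ 0)
    (hW : RhoInvariant q l W) :
    quotientEnd (M2 q l) W hW.2 * quotientEnd (M1 q l) W hW.1 * quotientEnd (M2 q l) W hW.2 =
      quotientEnd (garside q l) W fun _ ↦ hW.garside_mulVec_mem hq hl := by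
  refine LinearMap.ext fun x ↦ ?_
  obtain ⟨x, rfl⟩ := W.mkQ_surjective x
  simp [mulVec_mulVec, ← mul_assoc, M2_mul_M1_mul_M2 hq hl]

lemma quotientEnd_garside_sq (hq : q ^ 2 + q + 1 = 0) (hl : l ≠ 0) (hW : RhoInvariant q l W) :
    quotientEnd (garside q l) W (fun _ ↦ hW.garside_mulVec_mem hq hl) ^ 2 = (-q ^ 2) • 1 := by
  refine LinearMap.ext fun x ↦ ?_
  obtain ⟨x, rfl⟩ := W.mkQ_surjective x
  simp [pow_two, mulVec_mulVec, garside_mul_garside hl, smul_mulVec, neg_mulVec]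

lemma exists_hasEigenvalue_pow_three_eq_sq (hq : q ^ 2 + q + 1 = 0) (hl : l ≠ 0)
    (hW : RhoInvariant q l W) (hd : finrank ℂ W = 4) :
    ∃ α : ℂ, α ^ 3 = q ^ 2 ∧ (quotientEnd (M1 q l) W hW.1).HasEigenvalue α := by
  have hq0 : q ≠ 0 := by rintro rfl; simp at hq
  have hV : finrank ℂ ((Fin 6 → ℂ) ⧸ W) = 2 := by
    have h := W.finrank_quotient_add_finrank
    rw [hd, finrank_fin_fun] at h
    omega
  have hne : W ≠ ⊤ := by rintro rfl; simp at hd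
  obtain ⟨β, hβ3, hβ⟩ := hW.exists_hasEigenvalue_pow_three_eq_one hq hl hne
  obtain ⟨α, hα, hdet⟩ := exists_hasEigenvalue_det_eq_mul hV hβ
  have hβ6 : β ^ 6 ≠ -q ^ 2 := fun h ↦ hq0 <| by
    linear_combination hq - h + (β ^ 3 + 1) * hβ3
  have hΔ := hW.quotientEnd_M1_mul_M2_mul_M1 hq hl
  have hdet3 := det_pow_three_eq_neg_of_braid hV
    (hΔ.trans (hW.quotientEnd_M2_mul_M1_mul_M2 hq hl).symm)
    (hΔ ▸ hW.quotientEnd_garside_sq hq hl) (neg_ne_zero.mpr (pow_ne_zero 2 hq0)) hβ hβ6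
  refine ⟨α, ?_, hα⟩
  rw [hdet, mul_pow, hβ3] at hdet3
  linear_combination hdet3

lemma exists_dual_eigenvector_pow_three_eq_sq (hq : q ^ 2 + q + 1 = 0) (hl : l ≠ 0)
    (hW : RhoInvariant q l W) (hd : finrank ℂ W = 4) :
    ∃ α : ℂ, α ^ 3 = q ^ 2 ∧ ∃ φ : Dual ℂ (Fin 6 → ℂ), φ ≠ 0 ∧ W ≤ LinearMap.ker φ ∧
      ∀ x, φ (M1 q l *ᵥ x) = α * φ x :=
  let ⟨α, hα3, hα⟩ := hW.exists_hasEigenvalue_pow_three_eq_sq hq hl hd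
  ⟨α, hα3, exists_dual_eigenvector_quotientEnd hα⟩

end RhoInvariant

section DualEigenvector

open Module

variable {q l α : ℂ} {φ : Dual ℂ (Fin 6 → ℂ)}

lemma dual_basisVec_eq_zero (hφ : ∀ x, φ (M1 q l *ᵥ x) = α * φ x)
    (hαq : α ≠ q) (hαq2 : α ≠ q ^ 2) (hαl : α ≠ l) :
    φ (basisVec 0) = 0 ∧ φ (basisVec 1) = 0 ∧ φ (basisVec 2) = 0 ∧ φ (basisVec 3) = 0 := by
  have hφe (i : Fin 6) := M1_mulVec_basisVec i ▸ hφ (basisVec i)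
  have h0 : φ (basisVec 0) = 0 := by
    have h : q * φ (basisVec 0) = α * φ (basisVec 0) := by simpa using hφe 0
    exact (mul_eq_mul_right_iff.mp h).resolve_left hαq.symm
  have h1 : φ (basisVec 1) = 0 := by
    have h : l * φ (basisVec 1) = α * φ (basisVec 1) := by simpa [h0] using hφe 1
    exact (mul_eq_mul_right_iff.mp h).resolve_left hαl.symm
  have h2 : φ (basisVec 2) = 0 := by
    have h : q ^ 2 * φ (basisVec 2) = α * φ (basisVec 2) := by simpa [h0, h1] using hφe 2
    exact (mul_eq_mul_right_iff.mp h).resolve_left hαq2.symm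
  have h3 : φ (basisVec 3) = 0 := by
    have h : q ^ 2 * φ (basisVec 3) = α * φ (basisVec 3) := by simpa [h0] using hφe 3
    exact (mul_eq_mul_right_iff.mp h).resolve_left hαq2.symm
  exact ⟨h0, h1, h2, h3⟩

lemma dual_basisVec_five_ne_zero (hφ : ∀ x, φ (M1 q l *ᵥ x) = α * φ x) (hφ0 : φ ≠ 0)
    (h0 : φ (basisVec 0) = 0) (h1 : φ (basisVec 1) = 0) (h2 : φ (basisVec 2) = 0)
    (h3 : φ (basisVec 3) = 0) : φ (basisVec 5) ≠ 0 := by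
  intro h5
  have hφe5 := M1_mulVec_basisVec 5 ▸ hφ (basisVec 5)
  have h4 : φ (basisVec 4) = 0 := by simpa [h0, h1, h2, h3, h5] using hφe5
  refine hφ0 ((Pi.basisFun ℂ (Fin 6)).ext fun i ↦ ?_)
  rw [Pi.basisFun_apply]
  fin_cases i
  exacts [h0, h1, h2, h3, h4, h5]

lemma dual_basisVec_five_ne_mul (hl : l ≠ 0) (hφ : ∀ x, φ (M1 q l *ᵥ x) = α * φ x)
    (h0 : φ (basisVec 0) = 0) (h1 : φ (basisVec 1) = 0) (h2 : φ (basisVec 2) = 0)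
    (h3 : φ (basisVec 3) = 0) (h5 : φ (basisVec 5) ≠ 0) :
    φ (basisVec 5) ≠ l * φ (basisVec 4) := by
  intro h45
  have hφe (i : Fin 6) := M1_mulVec_basisVec i ▸ hφ (basisVec i)
  have hφe4 : l⁻¹ * φ (basisVec 4) = α * φ (basisVec 4) := by
    simpa only [cons_val, map_smul, map_add, h0, h1, h3, smul_eq_mul, mul_zero, zero_add]
      using hφe 4
  have hφe5 : φ (basisVec 4) + φ (basisVec 5) = α * φ (basisVec 5) := by
    simpa [h0, h1, h2, h3] using hφe 5
  apply h5
  calc φ (basisVec 5) = α * (l * φ (basisVec 4)) - φ (basisVec 4) := by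
        rw [← h45, ← hφe5, add_sub_cancel_left]
    _ = l * (α * φ (basisVec 4)) - φ (basisVec 4) := by ring
    _ = 0 := by rw [← hφe4, mul_inv_cancel_left₀ hl, sub_self]

end DualEigenvector

lemma RhoInvariant.pow_three_eq_of_finrank_eq_four {q l : ℂ} {W : Submodule ℂ (Fin 6 → ℂ)}
    (hq : q ^ 2 + q + 1 = 0) (hl : l ≠ 0) (hW : RhoInvariant q l W)
    (hd : Module.finrank ℂ W = 4) : l ^ 3 = q ^ 2 := by
  have hq0 : q ≠ 0 := by rintro rfl; simp at hq
  have hq1 : q ≠ 1 := by rintro rfl; norm_num at hq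
  have hq3 : q ^ 3 = 1 := by linear_combination (q - 1) * hq
  obtain ⟨α, hα3, φ, hφ0, hφW, hφ⟩ := hW.exists_dual_eigenvector_pow_three_eq_sq hq hl hd
  by_contra hl3
  have hαq : α ≠ q := by
    rintro rfl
    exact hq1 (by linear_combination (1 - α) * hq3 + α * hα3)
  have hαq2 : α ≠ q ^ 2 := by
    rintro rfl
    exact hq1 (by linear_combination (1 - q ^ 4 - q) * hq3 + q * hα3)
  have hαl : α ≠ l := by rintro rfl; exact hl3 hα3
  obtain ⟨h0, h1, h2, h3⟩ := dual_basisVec_eq_zero hφ hαq hαq2 hαl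
  have h5 := dual_basisVec_five_ne_zero hφ hφ0 h0 h1 h2 h3
  let ψ : Module.Dual ℂ (Fin 6 → ℂ) := φ ∘ₗ (garside q l).mulVecLin
  have hψ (i : Fin 6) : ψ (basisVec i) = φ (garside q l *ᵥ basisVec i) := rfl
  simp only [garside_mulVec_basisVec] at hψ
  have hψW : W ≤ LinearMap.ker ψ := fun x hx ↦ hφW (hW.garside_mulVec_mem hq hl hx)
  have hWker := eq_ker_prod_of_finrank_add_two (by simp [hd]) hφW hψW h0
    (show ψ (basisVec 0) ≠ 0 by simpa [hψ] using And.intro hq0 h5) h5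
  have hM1e2 : M1 q l *ᵥ basisVec 2 ∈ W := by
    refine hW.1 _ ?_
    rw [hWker]
    simp [h2, h3, hψ]
  refine dual_basisVec_five_ne_mul hl hφ h0 h1 h2 h3 h5 ?_
  have hψM1e2 := M1_mulVec_basisVec 2 ▸ LinearMap.mem_ker.mp (hψW hM1e2)
  have h : -(q ^ 2 * (q * φ (basisVec 5))) + q ^ 2 * (q * l * φ (basisVec 4)) = 0 := by
    simpa [hψ, h3] using hψM1e2
  linear_combination -h - (φ (basisVec 5) - l * φ (basisVec 4)) * hq3

section Converse

variable {q l : ℂ}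

/-- A matrix whose kernel is the four-dimensional `ρ`-invariant subspace when `l ^ 3 = q ^ 2`. -/
def invariantEqs (q l : ℂ) : Matrix (Fin 2) (Fin 6) ℂ :=
  !![0, 0,     q ^ 2 + l, q - l, 1,         0;
     0, q ^ 2, 0,         -l,    l - q ^ 2, 0]

lemma invariantEqs_mul_M1 (hq : q ^ 2 + q + 1 = 0) (hl : l ≠ 0) (hl3 : l ^ 3 = q ^ 2) :
    invariantEqs q l * M1 q l = !![q ^ 2, 0; -q - l ^ 2 + q ^ 2 * l, l] * invariantEqs q l := by
  ext i j
  fin_cases i <;> fin_cases j <;>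
    simp [invariantEqs, M1, mul_apply, Fin.sum_univ_six] <;> field_simp <;> grind

lemma invariantEqs_mul_M2 (hq : q ^ 2 + q + 1 = 0) (hl : l ≠ 0) (hl3 : l ^ 3 = q ^ 2) :
    invariantEqs q l * M2 q l = !![q ^ 2, 1; 0, l] * invariantEqs q l := by
  ext i j
  fin_cases i <;> fin_cases j <;>
    simp [invariantEqs, M2, mul_apply, Fin.sum_univ_six] <;> field_simp <;> grind

lemma invariantEqs_mul_eq_one (hq3 : q ^ 3 = 1) :
    invariantEqs q l * !![0, 0; 1 - q * l, q; 0, 0; 0, 0; 1, 0; 0, 0] = 1 := by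
  ext i j
  fin_cases i <;> fin_cases j <;>
    simp [invariantEqs, mul_apply, Fin.sum_univ_six] <;> grind

lemma exists_rhoInvariant_finrank_eq_four (hq : q ^ 2 + q + 1 = 0) (hl : l ≠ 0)
    (hl3 : l ^ 3 = q ^ 2) :
    ∃ W : Submodule ℂ (Fin 6 → ℂ), RhoInvariant q l W ∧ Module.finrank ℂ W = 4 := by
  have hq3 : q ^ 3 = 1 := by linear_combination (q - 1) * hq
  refine ⟨LinearMap.ker (invariantEqs q l).mulVecLin,
    ⟨fun _ ↦ mulVec_mem_ker_of_mul_eq_mul (invariantEqs_mul_M1 hq hl hl3),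
      fun _ ↦ mulVec_mem_ker_of_mul_eq_mul (invariantEqs_mul_M2 hq hl hl3)⟩, ?_⟩
  simpa using finrank_ker_mulVecLin_add_card (invariantEqs_mul_eq_one (l := l) hq3)

end Converse

theorem stmt10_general (q l : ℂ) (hq3 : q ^ 3 = 1) (hq1 : q ≠ 1) (hl0 : l ≠ 0) :
    (¬ ∃ W : Submodule ℂ (Fin 6 → ℂ), RhoInvariant q l W ∧ Module.finrank ℂ W = 4) ↔
      l ^ 3 ≠ q ^ 2 := by
  have hq : q ^ 2 + q + 1 = 0 := by
    have h : (q - 1) * (q ^ 2 + q + 1) = 0 := by linear_combination hq3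
    exact (mul_eq_zero.mp h).resolve_left (sub_ne_zero.mpr hq1)
  refine not_congr ⟨fun ⟨W, hW, hd⟩ ↦ ?_, exists_rhoInvariant_finrank_eq_four hq hl0⟩
  exact hW.pow_three_eq_of_finrank_eq_four hq hl0 hd

theorem stmt10 (q l : ℂ) (hq3 : q^3 = 1) (hq1 : q ≠ 1) (hl0 : l ≠ 0)
    (hm1 : l ≠ -1) (h1 : l ≠ 1) (hq : l ≠ q) (hq2 : l ≠ q^2) :
    (¬ ∃ W : Submodule ℂ (Fin 6 → ℂ), RhoInvariant q l W ∧ Module.finrank ℂ W = 4) ↔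
      l^3 ≠ q^2 :=
  stmt10_general q l hq3 hq1 hl0
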